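/- In the tensor product model of F_γ ⊗ D⁺_j (see context), assume j is a half-integer with −½ ≤ j ≤ γ − 1. Let M := j+1+γ and let V_M ⊆ W be the span of {e_ν ⊗ f_{M−ν} : ν ∈ M_γ} (a (2γ+1)-dimensional J₀-eigenspace, preserved by Q). Then the restriction of Q to V_M is NOT diagonalizable: V_M is not spanned by eigenvectors of Q. Consequently Q is not diagonalizable on W, and the coupling F_γ ⊗ D⁺_j admits no decomposition into irreducible modules when j ≤ γ − 1. -/

import Mathlib

noncomputable section

/-- The principal complex square root, `√z = z^{1/2}` (so `(√z)² = z` for all `z ∈ ℂ`). -/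
def csqrt (z : ℂ) : ℂ := z ^ (1 / 2 : ℂ)

/-- `Γ₊(x,y) = i √(x-y) √(x+y+1)`. -/
def Gp (x y : ℂ) : ℂ := Complex.I * csqrt (x - y) * csqrt (x + y + 1)

/-- `Γ₋(x,y) = i √(x+y) √(x-y+1)`. -/
def Gm (x y : ℂ) : ℂ := Complex.I * csqrt (x + y) * csqrt (x - y + 1)

/-- The carrier of the coupling `F_γ ⊗ D⁺_j` with `2γ = N`: the basis vector
`e_ν ⊗ f_m` with `ν = -γ + a` (`a ≤ N`) and `m = j + 1 + b` is indexed by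
`(a, b) : Fin (N+1) × ℕ`. -/
abbrev Wmod (N : ℕ) := (Fin (N + 1) × ℕ) →₀ ℂ

/-- `γ = N/2` as a complex number. -/
def gammaC (N : ℕ) : ℂ := (N : ℂ) / 2

/-- `ν = -γ + a`. -/
def nuC (N : ℕ) (a : Fin (N + 1)) : ℂ := -gammaC N + (a : ℕ)

/-- `m = j + 1 + b`. -/
def mC (j : ℂ) (b : ℕ) : ℂ := j + 1 + (b : ℕ)

/-- `J₀ (e_ν ⊗ f_m) = (ν + m) e_ν ⊗ f_m`. -/
def J0op (N : ℕ) (j : ℂ) : Wmod N →ₗ[ℂ] Wmod N :=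
  Finsupp.lsum ℂ fun ab => (nuC N ab.1 + mC j ab.2) • Finsupp.lsingle ab

/-- `J₊ (e_ν ⊗ f_m) = Γ₊(γ,ν) e_{ν+1} ⊗ f_m + Γ₊(j,m) e_ν ⊗ f_{m+1}` (terms with
vanishing coefficient drop out, so the wrap-around `Fin` index is harmless). -/
def Jpop (N : ℕ) (j : ℂ) : Wmod N →ₗ[ℂ] Wmod N :=
  Finsupp.lsum ℂ fun ab =>
    Gp (gammaC N) (nuC N ab.1) • Finsupp.lsingle (ab.1 + 1, ab.2) +
    Gp j (mC j ab.2) • Finsupp.lsingle (ab.1, ab.2 + 1)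

/-- `J₋ (e_ν ⊗ f_m) = Γ₋(γ,ν) e_{ν-1} ⊗ f_m + Γ₋(j,m) e_ν ⊗ f_{m-1}` (terms with
vanishing coefficient drop out, so the truncated index is harmless). -/
def Jmop (N : ℕ) (j : ℂ) : Wmod N →ₗ[ℂ] Wmod N :=
  Finsupp.lsum ℂ fun ab =>
    Gm (gammaC N) (nuC N ab.1) • Finsupp.lsingle (ab.1 - 1, ab.2) +
    Gm j (mC j ab.2) • Finsupp.lsingle (ab.1, ab.2 - 1)

/-- The Casimir operator `Q = -J₀(J₀+1) + J₋J₊`. -/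
def Qop (N : ℕ) (j : ℂ) : Wmod N →ₗ[ℂ] Wmod N :=
  -(J0op N j ∘ₗ (J0op N j + LinearMap.id)) + Jmop N j ∘ₗ Jpop N j

/-- The generating set of the `J₀`-eigenspace `V_M`, `M = j + 1 + γ`:
the basis vectors `e_ν ⊗ f_{M-ν}` with `ν = -γ + a ∈ M_γ`. -/
def VMset (N : ℕ) : Set (Wmod N) :=
  {w | ∃ a : Fin (N + 1), w = Finsupp.single (a, N - (a : ℕ)) (1 : ℂ)}

/-- The `(2γ+1)`-dimensional `J₀`-eigenspace `V_{j+1+γ} ⊆ F_γ ⊗ D⁺_j`. -/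
def VM (N : ℕ) : Submodule ℂ (Wmod N) := Submodule.span ℂ (VMset N)

open Polynomial in
/-- On a span of eigenvectors, a generalized eigenvector of rank two is an eigenvector. -/
lemma apply_sub_eq_zero_of_mem_span_eigenvectors {V : Type*} [AddCommGroup V] [Module ℂ V]
    (T : Module.End ℂ V) (s : Set V) (hs : ∀ w ∈ s, ∃ c : ℂ, T w = c • w) (c : ℂ) {w : V}
    (hw : w ∈ Submodule.span ℂ s) (h : T (T w - c • w) = c • (T w - c • w)) :
    T w - c • w = 0 := by
  have key : ∃ p : ℂ[X], p.eval c ≠ 0 ∧ aeval T p (T w - c • w) = 0 := by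
    clear h
    induction hw using Submodule.span_induction with
    | mem x hx =>
      obtain ⟨μ, hμ⟩ := hs x hx
      by_cases hc : μ = c
      · exact ⟨1, by simp, by simp [hμ, hc]⟩
      · refine ⟨X - C μ, by simpa [sub_eq_zero] using Ne.symm hc, ?_⟩
        simp [hμ, Module.algebraMap_end_apply]
        module
    | zero => exact ⟨1, by simp, by simp⟩
    | add x y _ _ hx hy =>
      obtain ⟨p, hp, hpx⟩ := hx
      obtain ⟨q, hq, hqy⟩ := hy
      refine ⟨p * q, by simp [hp, hq], ?_⟩
      have : T (x + y) - c • (x + y) = (T x - c • x) + (T y - c • y) := by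
        rw [map_add]; module
      rw [this, map_add]
      nth_rewrite 1 [mul_comm p q]
      rw [map_mul, map_mul, Module.End.mul_apply, Module.End.mul_apply, hpx, hqy]
      simp
    | smul a x _ hx =>
      obtain ⟨p, hp, hpx⟩ := hx
      refine ⟨p, hp, ?_⟩
      have : T (a • x) - c • (a • x) = a • (T x - c • x) := by
        rw [map_smul]; module
      rw [this, map_smul, hpx, smul_zero]
  obtain ⟨p, hp, hpz⟩ := key
  by_contra hz
  rw [Module.End.aeval_apply_of_hasEigenvector
    ⟨Module.End.mem_eigenspace_iff.mpr h, hz⟩] at hpz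
  exact (smul_ne_zero hp hz) hpz

lemma casimir_eq_of_bracket {A : Type*} [Ring A] {H E F : A} (hFE : F * E = E * F + (H + H)) :
    -(H * (H + 1)) + F * E = -(H * (H - 1)) + E * F := by
  rw [hFE]; noncomm_ring

lemma casimir_commute_raising {A : Type*} [Ring A] {H E F : A} (hE : H * E = E * (H + 1))
    (hFE : F * E = E * F + (H + H)) : Commute (-(H * (H + 1)) + F * E) E := by
  have hE' : E * H = (H - 1) * E := by rw [sub_mul, hE]; noncomm_ring
  have h : E * (H * (H + 1)) = H * (H - 1) * E := by
    rw [← mul_assoc, hE', mul_assoc, mul_add, hE']; noncomm_ring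
  calc (-(H * (H + 1)) + F * E) * E
      = -(H * (H - 1) * E) + E * (F * E) := by rw [casimir_eq_of_bracket hFE]; noncomm_ring
    _ = E * (-(H * (H + 1)) + F * E) := by rw [← h]; noncomm_ring

lemma casimir_commute_weight {A : Type*} [Ring A] {H E F : A} (hE : H * E = E * (H + 1))
    (hF : H * F = F * (H - 1)) : Commute (-(H * (H + 1)) + F * E) H := by
  have h : H * (F * E) = F * E * H := by
    rw [← mul_assoc, hF, mul_assoc, sub_mul, hE]; noncomm_ring
  show (-(H * (H + 1)) + F * E) * H = H * (-(H * (H + 1)) + F * E)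
  rw [mul_add H (-_), h]
  noncomm_ring

lemma csqrt_mul_self (z : ℂ) : csqrt z * csqrt z = z := by
  rcases eq_or_ne z 0 with rfl | hz
  · simp [csqrt]
  · rw [csqrt, ← Complex.cpow_add _ _ hz]; norm_num

lemma csqrt_zero : csqrt 0 = 0 := by simp [csqrt]

lemma csqrt_ne_zero {z : ℂ} (hz : z ≠ 0) : csqrt z ≠ 0 := fun h => hz <| by
  rw [← csqrt_mul_self z, h, zero_mul]

lemma Gm_add_one (x y : ℂ) : Gm x (y + 1) = Gp x y := by
  rw [Gm, Gp, show x - (y + 1) + 1 = x - y by ring, show x + (y + 1) = x + y + 1 by ring]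
  ring

lemma Gp_mul_self (x y : ℂ) : Gp x y * Gp x y = -((x - y) * (x + y + 1)) := by
  have h1 := csqrt_mul_self (x - y)
  have h2 := csqrt_mul_self (x + y + 1)
  have h3 := Complex.I_mul_I
  rw [Gp]
  linear_combination (csqrt (x - y) * csqrt (x - y) * csqrt (x + y + 1) * csqrt (x + y + 1)) * h3
    - csqrt (x + y + 1) * csqrt (x + y + 1) * h1 - (x - y) * h2

lemma Gp_ne_zero {x y : ℂ} (h1 : x - y ≠ 0) (h2 : x + y + 1 ≠ 0) : Gp x y ≠ 0 :=
  mul_ne_zero (mul_ne_zero Complex.I_ne_zero (csqrt_ne_zero h1)) (csqrt_ne_zero h2)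

lemma Gp_gammaC_last (N : ℕ) : Gp (gammaC N) (nuC N (Fin.last N)) = 0 := by
  have : gammaC N - nuC N (Fin.last N) = 0 := by
    simp only [nuC, gammaC, Fin.val_last]; ring
  simp [Gp, this, csqrt_zero]

lemma Gm_gammaC_zero (N : ℕ) : Gm (gammaC N) (nuC N 0) = 0 := by
  simp [Gm, nuC, csqrt_zero]

lemma Gm_mC_zero (j : ℂ) : Gm j (mC j 0) = 0 := by
  simp [Gm, mC, csqrt_zero]

lemma nuC_add_one {N : ℕ} {a : Fin (N + 1)} (ha : a ≠ Fin.last N) :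
    nuC N (a + 1) = nuC N a + 1 := by
  simp only [nuC, Fin.val_add_one, if_neg ha]; push_cast; ring

lemma nuC_sub_one {N : ℕ} {a : Fin (N + 1)} (ha : a ≠ 0) :
    nuC N (a - 1) + 1 = nuC N a := by
  have h : a - 1 ≠ Fin.last N := fun h => ha <| by
    rw [sub_eq_iff_eq_add.mp h, Fin.last_add_one]
  rw [← nuC_add_one h, sub_add_cancel]

lemma mC_succ (j : ℂ) (b : ℕ) : mC j (b + 1) = mC j b + 1 := by
  simp only [mC]; push_cast; ring

lemma J0op_single (N : ℕ) (j : ℂ) (a : Fin (N + 1)) (b : ℕ) (c : ℂ) :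
    J0op N j (Finsupp.single (a, b) c) = Finsupp.single (a, b) ((nuC N a + mC j b) * c) := by
  simp [J0op]

lemma Jpop_single (N : ℕ) (j : ℂ) (a : Fin (N + 1)) (b : ℕ) (c : ℂ) :
    Jpop N j (Finsupp.single (a, b) c) =
      Finsupp.single (a + 1, b) (Gp (gammaC N) (nuC N a) * c) +
      Finsupp.single (a, b + 1) (Gp j (mC j b) * c) := by
  simp [Jpop]

lemma Jmop_single (N : ℕ) (j : ℂ) (a : Fin (N + 1)) (b : ℕ) (c : ℂ) :
    Jmop N j (Finsupp.single (a, b) c) =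
      Finsupp.single (a - 1, b) (Gm (gammaC N) (nuC N a) * c) +
      Finsupp.single (a, b - 1) (Gm j (mC j b) * c) := by
  simp [Jmop]

lemma Gp_mul_Gm_gammaC (N : ℕ) (a : Fin (N + 1)) :
    Gm (gammaC N) (nuC N (a + 1)) * Gp (gammaC N) (nuC N a) =
      -((gammaC N - nuC N a) * (gammaC N + nuC N a + 1)) := by
  by_cases ha : a = Fin.last N
  · subst ha
    rw [← Gp_mul_self, Gp_gammaC_last]; simp
  · rw [nuC_add_one ha, Gm_add_one, Gp_mul_self]

lemma Gm_mul_Gp_gammaC (N : ℕ) (a : Fin (N + 1)) :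
    Gp (gammaC N) (nuC N (a - 1)) * Gm (gammaC N) (nuC N a) =
      -((gammaC N - nuC N a + 1) * (gammaC N + nuC N a)) := by
  by_cases ha : a = 0
  · subst ha
    rw [Gm_gammaC_zero]; simp [nuC]
  · rw [← nuC_sub_one ha, Gm_add_one, Gp_mul_self]; ring

lemma Jmop_mul_Jpop (N : ℕ) (j : ℂ) :
    Jmop N j * Jpop N j = Jpop N j * Jmop N j + (2 : ℂ) • J0op N j := by
  refine Finsupp.lhom_ext fun ⟨a, b⟩ c => ?_
  have hb : Finsupp.single (a, b - 1 + 1) (Gp j (mC j (b - 1)) * (Gm j (mC j b) * c)) =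
      Finsupp.single (a, b) (-((j - mC j b + 1) * (j + mC j b)) * c) := by
    cases b with
    | zero => rw [Gm_mC_zero]; simp [mC]
    | succ b =>
      rw [Nat.add_sub_cancel, mC_succ, Gm_add_one, ← mul_assoc, Gp_mul_self]
      congr 1; ring
  simp only [Module.End.mul_apply, LinearMap.add_apply, LinearMap.smul_apply, Jpop_single,
    Jmop_single, J0op_single, map_add, hb, add_sub_cancel_right, sub_add_cancel,
    Nat.add_sub_cancel, mC_succ, Gm_add_one, Finsupp.smul_single, smul_eq_mul]
  rw [← mul_assoc (Gm _ _), Gp_mul_Gm_gammaC, ← mul_assoc (Gp (gammaC N) (nuC N (a - 1))),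
    Gm_mul_Gp_gammaC, ← mul_assoc (Gp j _) (Gp j _), Gp_mul_self,
    mul_left_comm (Gm j _), mul_left_comm (Gm (gammaC N) _)]
  have hd : Finsupp.single (a, b) (-((gammaC N - nuC N a) * (gammaC N + nuC N a + 1)) * c) +
      Finsupp.single (a, b) (-((j - mC j b) * (j + mC j b + 1)) * c) =
      Finsupp.single (a, b) (-((gammaC N - nuC N a + 1) * (gammaC N + nuC N a)) * c) +
      Finsupp.single (a, b) (-((j - mC j b + 1) * (j + mC j b)) * c) +
      Finsupp.single (a, b) (2 * ((nuC N a + mC j b) * c)) := by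
    simp only [← Finsupp.single_add]
    congr 1; ring
  linear_combination (norm := abel) hd

lemma J0op_mul_Jpop (N : ℕ) (j : ℂ) :
    J0op N j * Jpop N j = Jpop N j * (J0op N j + 1) := by
  refine Finsupp.lhom_ext fun ⟨a, b⟩ c => ?_
  have ha : nuC N (a + 1) * Gp (gammaC N) (nuC N a) =
      (nuC N a + 1) * Gp (gammaC N) (nuC N a) := by
    by_cases ha : a = Fin.last N
    · rw [ha, Gp_gammaC_last]; simp
    · rw [nuC_add_one ha]
  simp only [Module.End.mul_apply, LinearMap.add_apply, Module.End.one_apply, Jpop_single,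
    J0op_single, map_add, mC_succ]
  rw [add_add_add_comm, ← Finsupp.single_add, ← Finsupp.single_add]
  congr 2
  · linear_combination c * ha
  · ring

lemma J0op_mul_Jmop (N : ℕ) (j : ℂ) :
    J0op N j * Jmop N j = Jmop N j * (J0op N j - 1) := by
  refine Finsupp.lhom_ext fun ⟨a, b⟩ c => ?_
  have ha : nuC N (a - 1) * Gm (gammaC N) (nuC N a) =
      (nuC N a - 1) * Gm (gammaC N) (nuC N a) := by
    by_cases ha : a = 0
    · rw [ha, Gm_gammaC_zero]; simp
    · rw [← nuC_sub_one ha]; ring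
  have hb : mC j (b - 1) * Gm j (mC j b) = (mC j b - 1) * Gm j (mC j b) := by
    cases b with
    | zero => rw [Gm_mC_zero]; simp
    | succ b => rw [mC_succ, Nat.add_sub_cancel]; ring
  simp only [Module.End.mul_apply, LinearMap.sub_apply, Module.End.one_apply, Jmop_single,
    J0op_single, map_add, map_sub]
  rw [add_sub_add_comm, ← Finsupp.single_sub, ← Finsupp.single_sub]
  congr 2
  · linear_combination c * ha
  · linear_combination c * hb

lemma Qop_eq_Jpop_mul_Jmop (N : ℕ) (j : ℂ) :
    Qop N j = -(J0op N j * (J0op N j - 1)) + Jpop N j * Jmop N j :=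
  casimir_eq_of_bracket (A := Module.End ℂ (Wmod N)) (H := J0op N j)
    (E := Jpop N j) (F := Jmop N j) ((Jmop_mul_Jpop N j).trans (by rw [two_smul]))

lemma Qop_commute_Jpop (N : ℕ) (j : ℂ) : Commute (Qop N j) (Jpop N j) :=
  casimir_commute_raising (A := Module.End ℂ (Wmod N)) (H := J0op N j)
    (E := Jpop N j) (F := Jmop N j) (J0op_mul_Jpop N j)
    ((Jmop_mul_Jpop N j).trans (by rw [two_smul]))

lemma Qop_commute_J0op (N : ℕ) (j : ℂ) : Commute (Qop N j) (J0op N j) :=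
  casimir_commute_weight (A := Module.End ℂ (Wmod N)) (H := J0op N j)
    (E := Jpop N j) (F := Jmop N j) (J0op_mul_Jpop N j) (J0op_mul_Jmop N j)

lemma J0op_apply (N : ℕ) (j : ℂ) (w : Wmod N) (p : Fin (N + 1) × ℕ) :
    J0op N j w p = (nuC N p.1 + mC j p.2) * w p := by
  induction w using Finsupp.induction_linear with
  | zero => simp
  | add f g hf hg => rw [map_add, Finsupp.add_apply, hf, hg, Finsupp.add_apply, mul_add]
  | single q c =>
    rw [J0op_single]
    by_cases h : q = p
    · subst h; simp
    · simp [Finsupp.single_eq_of_ne (Ne.symm h)]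

/-- `V_M` is the full `J₀`-eigenspace for the eigenvalue `j + 1 + γ`. -/
lemma mem_VM_iff (N : ℕ) (j : ℂ) (w : Wmod N) :
    w ∈ VM N ↔ J0op N j w = (j + 1 + gammaC N) • w := by
  have hset : VMset N =
      (fun p => Finsupp.single p (1 : ℂ)) '' {p : Fin (N + 1) × ℕ | (p.1 : ℕ) + p.2 = N} := by
    ext w
    constructor
    · rintro ⟨a, rfl⟩
      exact ⟨(a, N - a), by have := a.is_le; simp; omega, rfl⟩
    · rintro ⟨⟨a, b⟩, hp, rfl⟩
      have hp' : (a : ℕ) + b = N := hp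
      exact ⟨a, by simp only; congr 2; omega⟩
  rw [VM, hset, ← Finsupp.supported_eq_span_single, Finsupp.mem_supported']
  constructor
  · intro h
    ext p
    rw [J0op_apply, Finsupp.smul_apply, smul_eq_mul]
    by_cases hp : (p.1 : ℕ) + p.2 = N
    · have : ((p.1 : ℕ) : ℂ) + (p.2 : ℂ) = N := by exact_mod_cast hp
      congr 1
      simp only [nuC, mC, gammaC]
      linear_combination this
    · rw [h p hp]; simp
  · intro h p hp
    have hw := DFunLike.congr_fun h p
    rw [J0op_apply, Finsupp.smul_apply, smul_eq_mul] at hw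
    by_contra h0
    have := mul_right_cancel₀ h0 hw
    apply hp
    have h' : ((p.1 : ℕ) : ℂ) + (p.2 : ℂ) = N := by
      simp only [nuC, mC, gammaC] at this
      linear_combination this
    exact_mod_cast h'

lemma Qop_mem_VM {N : ℕ} (j : ℂ) {w : Wmod N} (hw : w ∈ VM N) : Qop N j w ∈ VM N := by
  rw [mem_VM_iff N j] at hw ⊢
  have := LinearMap.congr_fun (Qop_commute_J0op N j).eq w
  rw [Module.End.mul_apply, Module.End.mul_apply] at this
  rw [← this, hw, map_smul]

/-- The vector `J₊^{N-k} (e_{-γ+k} ⊗ f_{j+1})` of `V_M`. -/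
def raisedVec (N : ℕ) (j : ℂ) (k : ℕ) : Wmod N :=
  (Jpop N j ^ (N - k)) (Finsupp.single (Fin.ofNat (N + 1) k, 0) 1)

lemma J0op_Jpop_pow {N : ℕ} {j c : ℂ} {w : Wmod N} (hw : J0op N j w = c • w) (n : ℕ) :
    J0op N j ((Jpop N j ^ n) w) = (c + n) • (Jpop N j ^ n) w := by
  induction n with
  | zero => simpa using hw
  | succ n ih =>
    rw [pow_succ', Module.End.mul_apply, ← Module.End.mul_apply, J0op_mul_Jpop,
      Module.End.mul_apply, LinearMap.add_apply, ih, Module.End.one_apply, map_add, map_smul]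
    push_cast
    module

lemma nuC_ofNat {N k : ℕ} (hk : k ≤ N) :
    nuC N (Fin.ofNat (N + 1) k) = -gammaC N + k := by
  simp [nuC, Fin.ofNat, Nat.mod_eq_of_lt (Nat.lt_succ_of_le hk)]

lemma raisedVec_mem_VM {N : ℕ} (j : ℂ) {k : ℕ} (hk : k ≤ N) : raisedVec N j k ∈ VM N := by
  rw [mem_VM_iff N j, raisedVec, J0op_Jpop_pow (c := -gammaC N + k + (j + 1))]
  · congr 1
    rw [Nat.cast_sub hk, gammaC]; ring
  · rw [J0op_single, nuC_ofNat hk, Finsupp.smul_single]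
    simp [mC]

/-- The Casimir eigenvalue of a lowest weight vector of weight `j + 1 - γ + k`. -/
def casimirValue (N : ℕ) (j : ℂ) (k : ℕ) : ℂ :=
  -((-gammaC N + k + (j + 1)) * (-gammaC N + k + (j + 1) - 1))

lemma Qop_lowest {N : ℕ} (j : ℂ) {k : ℕ} (hk : k ≤ N) :
    Qop N j (Finsupp.single (Fin.ofNat (N + 1) k, 0) 1) =
      casimirValue N j k • Finsupp.single (Fin.ofNat (N + 1) k, 0) 1 +
      Gm (gammaC N) (-gammaC N + k) •
        Jpop N j (Finsupp.single (Fin.ofNat (N + 1) k - 1, 0) 1) := by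
  have h1 : Jmop N j (Finsupp.single (Fin.ofNat (N + 1) k, 0) 1) =
      Gm (gammaC N) (-gammaC N + k) • Finsupp.single (Fin.ofNat (N + 1) k - 1, 0) 1 := by
    rw [Jmop_single, Gm_mC_zero, nuC_ofNat hk, Finsupp.smul_single]
    simp
  have h0 : J0op N j (Finsupp.single (Fin.ofNat (N + 1) k, 0) 1) =
      (-gammaC N + k + (j + 1)) • Finsupp.single (Fin.ofNat (N + 1) k, 0) 1 := by
    rw [J0op_single, nuC_ofNat hk, Finsupp.smul_single]
    simp [mC]
  rw [Qop_eq_Jpop_mul_Jmop, LinearMap.add_apply, Module.End.mul_apply, h1, map_smul,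
    LinearMap.neg_apply, Module.End.mul_apply, LinearMap.sub_apply, Module.End.one_apply,
    map_sub, h0, map_smul, h0, casimirValue]
  module

lemma Qop_Jpop_pow (N : ℕ) (j : ℂ) (n : ℕ) (w : Wmod N) :
    Qop N j ((Jpop N j ^ n) w) = (Jpop N j ^ n) (Qop N j w) :=
  LinearMap.congr_fun ((Qop_commute_Jpop N j).pow_right n).eq w

lemma Qop_raisedVec_zero (N : ℕ) (j : ℂ) :
    Qop N j (raisedVec N j 0) = casimirValue N j 0 • raisedVec N j 0 := by
  have h : Gm (gammaC N) (-gammaC N + (0 : ℕ)) = 0 := by simp [Gm, csqrt_zero]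
  rw [raisedVec, Qop_Jpop_pow, Qop_lowest j (Nat.zero_le N), h, zero_smul, add_zero, map_smul]

lemma Qop_raisedVec_succ {N : ℕ} (j : ℂ) {k : ℕ} (hk : k + 1 ≤ N) :
    Qop N j (raisedVec N j (k + 1)) = casimirValue N j (k + 1) • raisedVec N j (k + 1) +
      Gp (gammaC N) (-gammaC N + k) • raisedVec N j k := by
  have h1 : Fin.ofNat (N + 1) (k + 1) - 1 = Fin.ofNat (N + 1) k := by
    rw [sub_eq_iff_eq_add]
    ext
    simp [Fin.ofNat, Fin.val_add]
  have h2 : -gammaC N + ((k + 1 : ℕ) : ℂ) = (-gammaC N + k) + 1 := by push_cast; ring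
  have h3 : N - k = (N - (k + 1)) + 1 := by omega
  rw [raisedVec, Qop_Jpop_pow, Qop_lowest j hk, h1, h2, Gm_add_one, map_add, map_smul,
    map_smul, raisedVec, h3, pow_succ, Module.End.mul_apply]

lemma Jpop_apply_zero_succ (N : ℕ) (j : ℂ) (w : Wmod N) (b : ℕ) :
    Jpop N j w (0, b + 1) = Gp j (mC j b) * w (0, b) := by
  induction w using Finsupp.induction_linear with
  | zero => simp
  | add f g hf hg => rw [map_add, Finsupp.add_apply, hf, hg, Finsupp.add_apply, mul_add]
  | single q c =>
    obtain ⟨a, d⟩ := q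
    rw [Jpop_single, Finsupp.add_apply]
    have h1 : Finsupp.single (a + 1, d) (Gp (gammaC N) (nuC N a) * c) (0, b + 1) = 0 := by
      by_cases ha : a = Fin.last N
      · rw [ha, Gp_gammaC_last]; simp
      · apply Finsupp.single_eq_of_ne
        intro h
        have h' : (0 : Fin (N + 1)) = a + 1 := congrArg Prod.fst h
        have := congrArg Fin.val h'
        rw [Fin.val_add_one, if_neg ha] at this
        simp at this
    rw [h1, zero_add]
    by_cases h : (a, d) = (0, b)
    · obtain ⟨rfl, rfl⟩ := Prod.mk.inj h
      simp
    · rw [Finsupp.single_eq_of_ne (Ne.symm h), Finsupp.single_eq_of_ne, mul_zero]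
      intro h'
      apply h
      have := Prod.mk.inj h'
      ext <;> simp <;> [rw [this.1]; omega]

lemma raisedVec_zero_ne_zero (N : ℕ) {j : ℂ} (hj : ∀ b : ℕ, j + mC j b + 1 ≠ 0) :
    raisedVec N j 0 ≠ 0 := by
  have key : ∀ n : ℕ, ((Jpop N j ^ n) (Finsupp.single (0, 0) 1)) (0, n) ≠ 0 := by
    intro n
    induction n with
    | zero => simp
    | succ n ih =>
      rw [pow_succ', Module.End.mul_apply, Jpop_apply_zero_succ]
      refine mul_ne_zero (Gp_ne_zero ?_ (hj n)) ih
      rw [mC, show j - (j + 1 + (n : ℂ)) = -((n + 1 : ℕ) : ℂ) by push_cast; ring, neg_ne_zero]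
      exact Nat.cast_ne_zero.mpr n.succ_ne_zero
  intro h
  apply key N
  have h' : (Jpop N j ^ N) (Finsupp.single (0, 0) 1) = 0 := h
  rw [h']; rfl

lemma Gp_gammaC_ne_zero {N k : ℕ} (hk : k < N) : Gp (gammaC N) (-gammaC N + k) ≠ 0 := by
  apply Gp_ne_zero
  · rw [gammaC, show (N : ℂ) / 2 - (-(N / 2) + k) = N - k by ring, sub_ne_zero]
    exact_mod_cast hk.ne'
  · rw [show gammaC N + (-gammaC N + k) + 1 = ((k + 1 : ℕ) : ℂ) by push_cast; ring]
    exact Nat.cast_ne_zero.mpr k.succ_ne_zero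

open Polynomial in
lemma exists_aeval_raisedVec (N : ℕ) (j : ℂ) {k : ℕ} (hk : k ≤ N) :
    ∃ p : ℂ[X], aeval (Qop N j) p (raisedVec N j k) = raisedVec N j 0 := by
  induction k with
  | zero => exact ⟨1, by simp⟩
  | succ k ih =>
    obtain ⟨p, hp⟩ := ih (by omega)
    refine ⟨p * (C (Gp (gammaC N) (-gammaC N + k))⁻¹ * (X - C (casimirValue N j (k + 1)))), ?_⟩
    rw [map_mul, Module.End.mul_apply, ← hp]
    congr 1
    simp [Module.algebraMap_end_apply, Qop_raisedVec_succ j hk,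
      smul_smul, mul_inv_cancel₀ (Gp_gammaC_ne_zero hk)]

open Polynomial in
lemma aeval_Qop_mem_VM {N : ℕ} (j : ℂ) (p : ℂ[X]) {w : Wmod N} (hw : w ∈ VM N) :
    aeval (Qop N j) p w ∈ VM N := by
  induction p using Polynomial.induction_on generalizing w with
  | C a => simpa [Module.algebraMap_end_apply] using (VM N).smul_mem a hw
  | add p q hp hq =>
    rw [map_add, LinearMap.add_apply]
    exact (VM N).add_mem (hp hw) (hq hw)
  | monomial n a h =>
    rw [pow_succ, ← mul_assoc, map_mul, Module.End.mul_apply, aeval_X]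
    exact h (Qop_mem_VM j hw)

/-- A coincidence of Casimir values yields a Jordan chain in `V_M`. -/
lemma exists_jordan_chain {N : ℕ} {j : ℂ} {k : ℕ} (hk : k + 1 ≤ N)
    (hval : casimirValue N j (k + 1) = casimirValue N j 0) :
    ∃ y ∈ VM N, Qop N j y - casimirValue N j 0 • y =
      Gp (gammaC N) (-gammaC N + k) • raisedVec N j 0 := by
  obtain ⟨p, hp⟩ := exists_aeval_raisedVec N j (k := k) (by omega)
  refine ⟨_, aeval_Qop_mem_VM j p (raisedVec_mem_VM j hk), ?_⟩
  have hc : Commute (Qop N j) (Polynomial.aeval (Qop N j) p) := by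
    simpa using (Polynomial.commute_X p).map (Polynomial.aeval (Qop N j))
  have hc' := LinearMap.congr_fun hc.eq (raisedVec N j (k + 1))
  rw [Module.End.mul_apply, Module.End.mul_apply] at hc'
  rw [hc', Qop_raisedVec_succ j hk, map_add, map_smul, map_smul, hp, hval]
  module

/-- In `F_γ ⊗ D⁺_j` with `j` a half-integer and `-½ ≤ j ≤ γ - 1`, the Casimir `Q`
preserves the `J₀`-eigenspace `V_{j+1+γ}`, but its restriction to it is NOT
diagonalizable: no set of `Q`-eigenvectors spans `V_{j+1+γ}`.  Consequently `Q` is not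
diagonalizable on the whole coupling either. -/
theorem casimir_not_diagonalizable (N : ℕ) (hN : 1 ≤ N) (jr : ℚ)
    (hhalf : ∃ k : ℤ, (k : ℚ) = 2 * jr) (hge : -(1 / 2) ≤ jr)
    (hle : jr ≤ (N : ℚ) / 2 - 1) :
    (∀ w ∈ VM N, Qop N (jr : ℂ) w ∈ VM N) ∧
    (¬ ∃ s : Set (Wmod N),
      (∀ w ∈ s, ∃ c : ℂ, Qop N (jr : ℂ) w = c • w) ∧ Submodule.span ℂ s = VM N) ∧
    (¬ ∃ s : Set (Wmod N),
      (∀ w ∈ s, ∃ c : ℂ, Qop N (jr : ℂ) w = c • w) ∧ Submodule.span ℂ s = ⊤) := by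
  obtain ⟨K, hK⟩ := hhalf
  have hK1 : -1 ≤ K := by
    have : (-1 : ℚ) ≤ K := by linarith
    exact_mod_cast this
  have hK2 : K ≤ (N : ℤ) - 2 := by
    have : (K : ℚ) ≤ N - 2 := by linarith
    exact_mod_cast this
  have hKC : (K : ℂ) = 2 * (jr : ℂ) := by exact_mod_cast congrArg (Rat.cast : ℚ → ℂ) hK
  obtain ⟨k, hk⟩ := Int.eq_ofNat_of_zero_le (show 0 ≤ (N : ℤ) - 2 - K by omega)
  have hkC : (N : ℂ) - 2 - K = k := by exact_mod_cast congrArg (Int.cast : ℤ → ℂ) hk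
  have hkN : k + 1 ≤ N := by omega
  have hval : casimirValue N jr (k + 1) = casimirValue N jr 0 := by
    simp only [casimirValue, gammaC]
    push_cast
    rw [← hkC, hKC]
    ring
  have hne : raisedVec N (jr : ℂ) 0 ≠ 0 := by
    apply raisedVec_zero_ne_zero
    intro b
    rw [mC, show (jr : ℂ) + (jr + 1 + (b : ℂ)) + 1 = ((K + 2 + b : ℤ) : ℂ) by
      push_cast; rw [hKC]; ring]
    exact Int.cast_ne_zero.mpr (by omega)
  obtain ⟨y, hy, hQy⟩ := exists_jordan_chain hkN hval
  have not_span : ∀ s : Set (Wmod N), (∀ w ∈ s, ∃ c : ℂ, Qop N (jr : ℂ) w = c • w) →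
      y ∉ Submodule.span ℂ s := by
    intro s hs hys
    have h := apply_sub_eq_zero_of_mem_span_eigenvectors (Qop N (jr : ℂ)) s hs
      (casimirValue N jr 0) hys (by rw [hQy, map_smul, Qop_raisedVec_zero, smul_comm])
    rw [hQy] at h
    exact smul_ne_zero (Gp_gammaC_ne_zero hkN) hne h
  refine ⟨fun w hw => Qop_mem_VM _ hw, ?_, ?_⟩
  · rintro ⟨s, hs, hspan⟩
    exact not_span s hs (hspan ▸ hy)
  · rintro ⟨s, hs, hspan⟩
    exact not_span s hs (hspan ▸ Submodule.mem_top)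

end
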